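/- Fix an integer d ≥ 2. For every integer n ≥ 1 and every k with 1 ≤ k ≤ d−1, the number of generalized linear diagrams of order (n,d) having exactly k loops, all of which lie in a single block, equals C(d−1, k) · Σ_{m=0}^{d−k} C(d(n−1)+1−m, d−k−m) · a(n−1,m). -/

import Mathlib

/-- A generalized linear diagram on points `1,…,N` whose blocks all have size `d`:
a partition of `{1,…,N}` into blocks of size `d`. -/
def IsLinearDiagram (N d : ℕ) (P : Finset (Finset ℕ)) : Prop :=
  (∀ b ∈ P, b.card = d) ∧ (∀ b ∈ P, ∀ x ∈ b, x ∈ Finset.Icc 1 N) ∧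
    ∀ x ∈ Finset.Icc 1 N, ∃! b : Finset ℕ, b ∈ P ∧ x ∈ b

/-- The number of loops of a linear diagram on points `1,…,N`: indices `i` with
`1 ≤ i ≤ N - 1` such that `i` and `i + 1` lie in the same block. -/
noncomputable def linLoops (N : ℕ) (P : Finset (Finset ℕ)) : ℕ :=
  Set.ncard {i : ℕ | 1 ≤ i ∧ i + 1 ≤ N ∧ ∃ b ∈ P, i ∈ b ∧ i + 1 ∈ b}

/-- `numA d n k` : the number of generalized linear diagrams of order `(n,d)`
with exactly `k` loops. -/
noncomputable def numA (d n k : ℕ) : ℕ :=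
  Set.ncard {P : Finset (Finset ℕ) | IsLinearDiagram (n * d) d P ∧ linLoops (n * d) P = k}

/-- `numA` with an integer loop index, zero for negative indices. -/
noncomputable def numAZ (d n : ℕ) (k : ℤ) : ℕ :=
  if 0 ≤ k then numA d n k.toNat else 0

/-- Binomial coefficient with integer arguments: `0` when `y < 0` or `y > x`. -/
def iChoose (x y : ℤ) : ℕ :=
  if 0 ≤ y ∧ y ≤ x then x.toNat.choose y.toNat else 0

/-- A generalized chord diagram on `ZMod N` whose blocks all have size `d`:
a partition of `ZMod N` into blocks of size `d`. -/
def IsChordDiagram (N d : ℕ) (P : Finset (Finset (ZMod N))) : Prop :=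
  (∀ b ∈ P, b.card = d) ∧ ∀ x : ZMod N, ∃! b : Finset (ZMod N), b ∈ P ∧ x ∈ b

/-- A chord diagram is loopless if no residues `i`, `i+1` lie in the same block. -/
def ChordLoopless (N : ℕ) (P : Finset (Finset (ZMod N))) : Prop :=
  ∀ i : ZMod N, ∀ b ∈ P, i ∈ b → i + 1 ∈ b → False

/-- `numB d n` : the number of loopless generalized chord diagrams of order `(n,d)`. -/
noncomputable def numB (d n : ℕ) : ℕ :=
  Set.ncard {P : Finset (Finset (ZMod (n * d))) |
    IsChordDiagram (n * d) d P ∧ ChordLoopless (n * d) P}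

/-- The shift `i ↦ i + v` modulo `M`, on the representatives `1,…,M`. -/
def shiftMod (M v i : ℕ) : ℕ := if i + v ≤ M then i + v else i + v - M

/-- An `m`-symmetric linear diagram with sector size `v` and blocks of size `d`:
a partition of `{1,…,m·v}` into blocks of size `d` invariant under the shift by `v`
modulo `m·v`. -/
def IsMSymLinear (d m v : ℕ) (P : Finset (Finset ℕ)) : Prop :=
  IsLinearDiagram (m * v) d P ∧ ∀ b ∈ P, b.image (shiftMod (m * v) v) ∈ P

/-- The number of loops lying in sector `s` (sectors numbered from `0`):
indices `i` with `s·v + 1 ≤ i ≤ (s+1)·v - 1` such that `i` and `i + 1` lie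
in the same block. -/
noncomputable def sectorLoops (v : ℕ) (P : Finset (Finset ℕ)) (s : ℕ) : ℕ :=
  Set.ncard {i : ℕ | s * v + 1 ≤ i ∧ i + 1 ≤ (s + 1) * v ∧ ∃ b ∈ P, i ∈ b ∧ i + 1 ∈ b}

/-- `numAtil d m v k` : the number of `m`-symmetric linear diagrams with sector size `v`,
blocks of size `d`, and exactly `k` loops in each sector (`ã(v,k;m,d)`). -/
noncomputable def numAtil (d m v k : ℕ) : ℕ :=
  Set.ncard {P : Finset (Finset ℕ) |
    IsMSymLinear d m v P ∧ ∀ s < m, sectorLoops v P s = k}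

/-!
A diagram whose loops, at least one in number, all lie in the block `b` is determined by `b` and by
the smaller diagram `Q` left after deleting `b` and relabelling the remaining points. The block `b`
distributes its `d` points over the `M + 1` gaps of the `M = (n - 1) d` remaining points. All loops
lie in `b` exactly when every loop of `Q` is broken by a nonempty gap, and then the number of loops
is `d` minus the number of nonempty gaps. So if `Q` has `m` loops, there are
`C(M + 1 - m, d - k - m)` ways to choose the `d - k` nonempty gaps and `C(d - 1, k)` ways to
distribute the `d` points over them.
-/

open Finset

section Counting

variable {ι : Type*} [DecidableEq ι]

lemma card_piAntidiag_nat (s : Finset ι) (n : ℕ) : #(piAntidiag s n) = (#s).multichoose n := by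
  rw [← card_finsuppAntidiag_nat_eq_multichoose, finsuppAntidiag, card_map, card_attach]

lemma card_filter_piAntidiag_forall_ne_zero_eq_card_piAntidiag_sub {s : Finset ι} {n : ℕ}
    (hn : #s ≤ n) :
    #{f ∈ piAntidiag s n | ∀ i ∈ s, f i ≠ 0} = #(piAntidiag s (n - #s)) := by
  have sum_add_one (f : ι → ℕ) :
      ∑ i ∈ s, (f i + if i ∈ s then 1 else 0) = ∑ i ∈ s, f i + #s := by
    rw [sum_add_distrib, card_eq_sum_ones]
    exact congrArg _ (sum_congr rfl fun i hi ↦ if_pos hi)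
  refine card_nbij' (fun f i ↦ f i - if i ∈ s then 1 else 0)
    (fun f i ↦ f i + if i ∈ s then 1 else 0) ?_ ?_ ?_ ?_
  · intro f hf
    obtain ⟨⟨hsum, hsupp⟩, hpos⟩ := by simpa using hf
    have hsum' := sum_add_one fun i ↦ f i - if i ∈ s then 1 else 0
    have : ∑ i ∈ s, (f i - (if i ∈ s then 1 else 0) + if i ∈ s then 1 else 0) = n := by
      rw [← hsum]
      exact sum_congr rfl fun i hi ↦ by have := hpos i hi; simp only [if_pos hi]; omega
    refine mem_coe.2 (mem_piAntidiag.2 ⟨by beta_reduce; omega, fun i hi ↦ hsupp i ?_⟩)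
    exact fun h ↦ hi (by simp only [h, Nat.zero_sub])
  · intro f hf
    obtain ⟨hsum, hsupp⟩ := mem_piAntidiag.1 (mem_coe.1 hf)
    have hsum' : ∑ i ∈ s, (f i + if i ∈ s then 1 else 0) = n := by
      rw [sum_add_one, hsum, Nat.sub_add_cancel hn]
    refine mem_coe.2 (mem_filter.2 ⟨mem_piAntidiag.2 ⟨hsum', fun i hi ↦ ?_⟩,
      fun i hi ↦ by simp [hi]⟩)
    by_contra his
    exact hi (by simpa [his] using fun h ↦ his (hsupp i h))
  · intro f hf
    obtain ⟨-, hpos⟩ := by simpa using hf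
    ext i
    exact Nat.sub_add_cancel (by have := hpos i; split_ifs with hi <;> grind)
  · intro f _
    ext i
    simp

lemma card_filter_piAntidiag_forall_ne_zero {s : Finset ι} {n : ℕ} (hn : #s ≤ n) :
    #{f ∈ piAntidiag s n | ∀ i ∈ s, f i ≠ 0} = (n - 1).choose (n - #s) := by
  rw [card_filter_piAntidiag_forall_ne_zero_eq_card_piAntidiag_sub hn, card_piAntidiag_nat,
    Nat.multichoose_eq]
  congr 1
  omega

lemma filter_piAntidiag_support_eq {s t : Finset ι} (hts : t ⊆ s) (n : ℕ) :
    {f ∈ piAntidiag s n | {i ∈ s | f i ≠ 0} = t} =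
      {f ∈ piAntidiag t n | ∀ i ∈ t, f i ≠ 0} := by
  ext f
  simp only [mem_filter, mem_piAntidiag]
  constructor
  · rintro ⟨⟨hsum, hsupp⟩, rfl⟩
    refine ⟨⟨by rw [← hsum, sum_filter_ne_zero], fun i hi ↦ ?_⟩, by grind⟩
    exact mem_filter.2 ⟨hsupp i hi, hi⟩
  · rintro ⟨⟨hsum, hsupp⟩, hpos⟩
    refine ⟨⟨?_, fun i hi ↦ hts (hsupp i hi)⟩, by grind⟩
    rw [← hsum]
    exact (sum_subset hts fun i _ hi ↦ by_contra fun h ↦ hi (hsupp i h)).symm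

lemma iChoose_sub_sub {u c : ℕ} (r : ℕ) (hc : c ≤ u) :
    iChoose ((u : ℤ) - c) ((r : ℤ) - c) = if c ≤ r then (u - c).choose (r - c) else 0 := by
  rw [iChoose]
  split_ifs with h₁ h₂ h₂
  · congr 1 <;> omega
  · omega
  · exact (Nat.choose_eq_zero_of_lt (by omega)).symm
  · rfl

lemma iChoose_of_neg {x y : ℤ} (hy : y < 0) : iChoose x y = 0 := if_neg (by omega)

lemma card_filter_powersetCard_superset {s t : Finset ι} (hst : s ⊆ t) (r : ℕ) :
    #{u ∈ powersetCard r t | s ⊆ u} = iChoose ((#t : ℤ) - #s) ((r : ℤ) - #s) := by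
  rw [iChoose_sub_sub r (card_le_card hst)]
  split_ifs with hsr
  · exact card_filter_powersetCard_subset _ _ _ hst hsr
  · rw [card_eq_zero, filter_eq_empty_iff]
    intro u hu hsu
    exact hsr ((card_le_card hsu).trans (mem_powersetCard.1 hu).2.le)

lemma card_filter_piAntidiag_support {s t : Finset ι} (hst : s ⊆ t) {r n : ℕ} (hr : r ≤ n) :
    #{f ∈ piAntidiag t n | (∀ i ∈ s, f i ≠ 0) ∧ #{i ∈ t | f i ≠ 0} = r} =
      (n - 1).choose (n - r) * iChoose ((#t : ℤ) - #s) ((r : ℤ) - #s) := by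
  rw [card_eq_sum_card_fiberwise (f := fun f ↦ {i ∈ t | f i ≠ 0})
    (t := {u ∈ powersetCard r t | s ⊆ u})]
  · rw [← card_filter_powersetCard_superset hst, mul_comm, ← smul_eq_mul]
    refine sum_eq_card_nsmul fun u hu ↦ ?_
    obtain ⟨hut, rfl⟩ := mem_powersetCard.1 (mem_filter.1 hu).1
    have hsu := (mem_filter.1 hu).2
    rw [← card_filter_piAntidiag_forall_ne_zero hr, ← filter_piAntidiag_support_eq hut]
    congr 1
    grind
  · intro f hf
    obtain ⟨-, hs, hr⟩ := mem_filter.1 (mem_coe.1 hf)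
    refine mem_coe.2 (mem_filter.2 ⟨mem_powersetCard.2 ⟨filter_subset _ _, hr⟩, fun i hi ↦ ?_⟩)
    exact mem_filter.2 ⟨hst hi, hs i hi⟩

end Counting

section Skip

/-- The increasing enumeration of the complement of `b`. When `0 ∉ b` it fixes `0`, so its values
at `1, 2, …` are the positive points outside `b` in increasing order. -/
noncomputable def skip (b : Finset ℕ) : ℕ → ℕ := Nat.nth (· ∉ b)

variable {b : Finset ℕ} {M d : ℕ}

lemma infinite_setOf_notMem (b : Finset ℕ) : {x | x ∉ b}.Infinite := b.finite_toSet.infinite_compl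

lemma skip_strictMono (b : Finset ℕ) : StrictMono (skip b) :=
  Nat.nth_strictMono (infinite_setOf_notMem b)

lemma range_skip (b : Finset ℕ) : Set.range (skip b) = {x | x ∉ b} :=
  Nat.range_nth_of_infinite (infinite_setOf_notMem b)

lemma skip_notMem (b : Finset ℕ) (j : ℕ) : skip b j ∉ b := by
  have : skip b j ∈ {x | x ∉ b} := range_skip b ▸ Set.mem_range_self j
  exact this

lemma exists_skip_eq {x : ℕ} (hx : x ∉ b) : ∃ j, skip b j = x := by
  have : x ∈ Set.range (skip b) := by rw [range_skip]; exact hx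
  exact this

lemma skip_zero (hb : 0 ∉ b) : skip b 0 = 0 := Nat.nth_zero_of_zero hb

lemma skip_eq_add {j : ℕ} (hb : b ⊆ range (j + #b)) : skip b j = j + #b := by
  have notMem : j + #b ∉ b := fun h ↦ by simpa using hb h
  have count_eq : Nat.count (· ∉ b) (j + #b) = j := by
    rw [Nat.count_eq_card_filter_range, ← sdiff_eq_filter, card_sdiff_of_subset hb, card_range,
      Nat.add_sub_cancel]
  calc skip b j = Nat.nth (· ∉ b) (Nat.count (· ∉ b) (j + #b)) := by rw [skip, count_eq]
    _ = j + #b := Nat.nth_count notMem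

lemma zero_notMem_of_mem_powersetCard_Icc (hb : b ∈ powersetCard d (Icc 1 (M + d))) : 0 ∉ b :=
  fun h ↦ by simpa using (mem_powersetCard.1 hb).1 h

lemma skip_eq_add_of_lt (hb : b ∈ powersetCard d (Icc 1 (M + d))) {j : ℕ} (hj : M < j) :
    skip b j = j + d := by
  obtain ⟨hsub, rfl⟩ := mem_powersetCard.1 hb
  refine skip_eq_add fun x hx ↦ ?_
  have := mem_Icc.1 (hsub hx)
  exact mem_range.2 (by omega)

lemma skip_mem_Icc_iff (hb : b ∈ powersetCard d (Icc 1 (M + d))) {j : ℕ} :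
    skip b j ∈ Icc 1 (M + d) ↔ j ∈ Icc 1 M := by
  have lower := (skip_strictMono b).lt_iff_lt (a := 0) (b := j)
  have upper := (skip_strictMono b).lt_iff_lt (a := j) (b := M + 1)
  rw [skip_zero (zero_notMem_of_mem_powersetCard_Icc hb)] at lower
  rw [skip_eq_add_of_lt hb M.lt_succ_self] at upper
  rw [mem_Icc, mem_Icc]
  omega

end Skip

section Gap

/-- The number of points of `b` in the `j`-th gap, between the `j`-th and the `j + 1`-st point
outside `b`. -/
noncomputable def gap (b : Finset ℕ) (j : ℕ) : ℕ := skip b (j + 1) - skip b j - 1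

variable {b : Finset ℕ} {M d : ℕ}

lemma skip_succ (b : Finset ℕ) (j : ℕ) : skip b (j + 1) = skip b j + gap b j + 1 := by
  have := skip_strictMono b (Nat.lt_add_one j)
  rw [gap]
  omega

lemma skip_eq_add_sum (hb : 0 ∉ b) (j : ℕ) : skip b j = j + ∑ h ∈ range j, gap b h := by
  induction j with
  | zero => simp [skip_zero hb]
  | succ j ih => rw [skip_succ, ih, sum_range_succ]; ring

lemma gap_mem_piAntidiag (hb : b ∈ powersetCard d (Icc 1 (M + d))) :
    gap b ∈ piAntidiag (range (M + 1)) d := by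
  refine mem_piAntidiag.2 ⟨?_, fun j hj ↦ ?_⟩
  · have := skip_eq_add_sum (zero_notMem_of_mem_powersetCard_Icc hb) (M + 1)
    rw [skip_eq_add_of_lt hb M.lt_succ_self] at this
    change ∑ h ∈ range (M + 1), gap b h = d
    omega
  · by_contra hjM
    rw [mem_range, not_lt] at hjM
    refine hj ?_
    rw [gap, skip_eq_add_of_lt hb hjM, skip_eq_add_of_lt hb (Nat.lt_succ_of_lt hjM)]
    omega

lemma gap_injOn : Set.InjOn gap {b | 0 ∉ b} := by
  intro b hb c hc h
  have skip_eq : skip b = skip c := by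
    ext j
    rw [skip_eq_add_sum hb, skip_eq_add_sum hc, h]
  have notMem_eq : {x | x ∉ b} = {x | x ∉ c} := by rw [← range_skip, skip_eq, range_skip]
  ext x
  exact not_iff_not.1 (Set.ext_iff.1 notMem_eq x)

lemma gap_bijOn (M d : ℕ) :
    Set.BijOn gap (powersetCard d (Icc 1 (M + d))) (piAntidiag (range (M + 1)) d) := by
  have mapsTo : Set.MapsTo gap (powersetCard d (Icc 1 (M + d))) (piAntidiag (range (M + 1)) d) :=
    fun b hb ↦ mem_coe.2 (gap_mem_piAntidiag (mem_coe.1 hb))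
  have injOn : Set.InjOn gap (powersetCard d (Icc 1 (M + d))) :=
    gap_injOn.mono fun b hb ↦ zero_notMem_of_mem_powersetCard_Icc (mem_coe.1 hb)
  refine ⟨mapsTo, injOn, surjOn_of_injOn_of_card_le gap mapsTo injOn ?_⟩
  rw [card_piAntidiag_nat, card_powersetCard, card_range, Nat.card_Icc, Nat.multichoose_eq]
  exact (congrArg (Nat.choose · d) (by omega)).le

end Gap

section BlockLoops

/-- The loops lying in the block `b`, each given by its first point. -/
def blockLoops (b : Finset ℕ) : Finset ℕ := {i ∈ b | i + 1 ∈ b}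

variable {b : Finset ℕ} {M d k : ℕ}

lemma mem_blockLoops {i : ℕ} : i ∈ blockLoops b ↔ i ∈ b ∧ i + 1 ∈ b := mem_filter

lemma skip_eq_skip_add_one_iff {i j : ℕ} :
    skip b i = skip b j + 1 ↔ i = j + 1 ∧ gap b j = 0 := by
  have hsucc := skip_succ b j
  have hlt := (skip_strictMono b).lt_iff_lt (a := j) (b := i)
  have hle := (skip_strictMono b).le_iff_le (a := i) (b := j + 1)
  constructor
  · intro h
    have hi : i = j + 1 := by omega
    subst hi
    omega
  · rintro ⟨rfl, hj⟩
    omega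

lemma skip_add_gap_mem {j : ℕ} (hj : gap b j ≠ 0) : skip b j + gap b j ∈ b := by
  by_contra hmem
  obtain ⟨i, hi⟩ := exists_skip_eq hmem
  have hsucc := skip_succ b j
  have lower := (skip_strictMono b).lt_iff_lt (a := j) (b := i)
  have upper := (skip_strictMono b).lt_iff_lt (a := i) (b := j + 1)
  omega

lemma card_filter_succ_notMem (hb : b ∈ powersetCard d (Icc 1 (M + d))) :
    #{i ∈ b | i + 1 ∉ b} = #{j ∈ range (M + 1) | gap b j ≠ 0} := by
  -- If gap `j` is nonempty, `skip b j + gap b j` is the last point of the run of `b` filling it.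
  symm
  refine card_bij (fun j _ ↦ skip b j + gap b j) (fun j hj ↦ ?_) (fun i _ j _ hij ↦ ?_)
    fun i hi ↦ ?_
  · exact mem_filter.2 ⟨skip_add_gap_mem (mem_filter.1 hj).2, skip_succ b j ▸ skip_notMem b (j + 1)⟩
  · have skip_eq : skip b (i + 1) = skip b (j + 1) := by rw [skip_succ, skip_succ, hij]
    exact Nat.succ_injective ((skip_strictMono b).injective skip_eq)
  · obtain ⟨hi, hi'⟩ := mem_filter.1 hi
    obtain ⟨_ | j, hj⟩ := exists_skip_eq hi'
    · rw [skip_zero (zero_notMem_of_mem_powersetCard_Icc hb)] at hj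
      omega
    · rw [skip_succ, Nat.add_right_cancel_iff] at hj
      have gap_ne_zero : gap b j ≠ 0 := fun h ↦ skip_notMem b j (by rwa [← hj, h] at hi)
      exact ⟨j, mem_filter.2 ⟨(mem_piAntidiag.1 (gap_mem_piAntidiag hb)).2 j gap_ne_zero,
        gap_ne_zero⟩, hj⟩

lemma card_blockLoops_add_card_filter_gap (hb : b ∈ powersetCard d (Icc 1 (M + d))) :
    #(blockLoops b) + #{j ∈ range (M + 1) | gap b j ≠ 0} = d := by
  rw [← card_filter_succ_notMem hb, blockLoops, card_filter_add_card_filter_not]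
  exact (mem_powersetCard.1 hb).2

/-- The `d`-element blocks in `{1, …, M + d}` that have `k` loops and at least one point in the
`j`-th gap for every `j ∈ L`: with `L` the loops of a diagram on the remaining points, these are the
blocks whose insertion breaks all loops of that diagram. -/
noncomputable def breakingBlocks (M d k : ℕ) (L : Finset ℕ) : Finset (Finset ℕ) :=
  {b ∈ powersetCard d (Icc 1 (M + d)) | (∀ j ∈ L, gap b j ≠ 0) ∧ #(blockLoops b) = k}

lemma mem_breakingBlocks {L : Finset ℕ} :
    b ∈ breakingBlocks M d k L ↔
      b ∈ powersetCard d (Icc 1 (M + d)) ∧ (∀ j ∈ L, gap b j ≠ 0) ∧ #(blockLoops b) = k :=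
  mem_filter

lemma card_breakingBlocks {L : Finset ℕ} (hL : L ⊆ range (M + 1)) (hk : k ≤ d) :
    #(breakingBlocks M d k L) =
      (d - 1).choose k * iChoose ((M : ℤ) + 1 - #L) ((d : ℤ) - k - #L) := by
  have card_eq : #(breakingBlocks M d k L) = #{f ∈ piAntidiag (range (M + 1)) d |
      (∀ j ∈ L, f j ≠ 0) ∧ #{j ∈ range (M + 1) | f j ≠ 0} = d - k} := by
    refine Set.BijOn.finsetCard_eq gap ?_
    convert (gap_bijOn M d).subset_right (coe_subset.2 (filter_subset _ _)) using 1
    ext b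
    rw [Set.mem_inter_iff, mem_coe, mem_coe, mem_breakingBlocks]
    refine and_congr_right fun hb ↦ ?_
    have hcard := card_blockLoops_add_card_filter_gap hb
    simp only [Set.mem_preimage, mem_coe, mem_filter, gap_mem_piAntidiag hb, true_and]
    exact and_congr_right fun _ ↦ by omega
  rw [card_eq, card_filter_piAntidiag_support hL (Nat.sub_le d k), card_range,
    Nat.sub_sub_self hk]
  push_cast [hk]
  rfl

end BlockLoops

section Diagrams

/-- The loops of a diagram with blocks `P`, each given by its first point. -/
def loops (P : Finset (Finset ℕ)) : Finset ℕ := P.biUnion blockLoops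

variable {N d : ℕ} {b : Finset ℕ} {P : Finset (Finset ℕ)}

lemma mem_loops {i : ℕ} : i ∈ loops P ↔ ∃ c ∈ P, i ∈ c ∧ i + 1 ∈ c := by
  simp only [loops, mem_biUnion, mem_blockLoops]

lemma IsLinearDiagram.eq_of_mem (hP : IsLinearDiagram N d P) {c : Finset ℕ} (hb : b ∈ P)
    (hc : c ∈ P) {x : ℕ} (hxb : x ∈ b) (hxc : x ∈ c) : b = c :=
  (hP.2.2 x (hP.2.1 b hb x hxb)).unique ⟨hb, hxb⟩ ⟨hc, hxc⟩

lemma IsLinearDiagram.mem_powersetCard (hP : IsLinearDiagram N d P) (hb : b ∈ P) :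
    b ∈ powersetCard d (Icc 1 N) :=
  Finset.mem_powersetCard.2 ⟨hP.2.1 b hb, hP.1 b hb⟩

lemma IsLinearDiagram.mem_loops_iff (hP : IsLinearDiagram N d P) {i : ℕ} :
    i ∈ loops P ↔ 1 ≤ i ∧ i + 1 ≤ N ∧ ∃ c ∈ P, i ∈ c ∧ i + 1 ∈ c := by
  rw [mem_loops]
  refine ⟨fun ⟨c, hc, hi, hi'⟩ ↦ ?_, fun ⟨_, _, h⟩ ↦ h⟩
  exact ⟨(mem_Icc.1 (hP.2.1 c hc i hi)).1, (mem_Icc.1 (hP.2.1 c hc _ hi')).2, c, hc, hi, hi'⟩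

lemma IsLinearDiagram.linLoops_eq (hP : IsLinearDiagram N d P) : linLoops N P = #(loops P) := by
  rw [linLoops, ← Set.ncard_coe_finset]
  congr 1
  ext i
  exact hP.mem_loops_iff.symm

lemma IsLinearDiagram.loops_subset_range (hP : IsLinearDiagram N d P) : loops P ⊆ range N := by
  intro i hi
  exact mem_range.2 (hP.mem_loops_iff.1 hi).2.1

lemma IsLinearDiagram.loops_subset_blockLoops_iff (hP : IsLinearDiagram N d P) :
    loops P ⊆ blockLoops b ↔
      ∀ i, 1 ≤ i → i + 1 ≤ N → (∃ c ∈ P, i ∈ c ∧ i + 1 ∈ c) → i ∈ b ∧ i + 1 ∈ b := by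
  simp only [subset_iff, hP.mem_loops_iff, mem_blockLoops, and_imp]

lemma finite_setOf_isLinearDiagram (N d : ℕ) : {P | IsLinearDiagram N d P}.Finite :=
  (powersetCard d (Icc 1 N)).powerset.finite_toSet.subset fun _ hP ↦
    mem_coe.2 (mem_powerset.2 fun _ ↦ hP.mem_powersetCard)

/-- The finite set of generalized linear diagrams on `{1, …, N}` with blocks of size `d`. -/
noncomputable def diagrams (N d : ℕ) : Finset (Finset (Finset ℕ)) :=
  (finite_setOf_isLinearDiagram N d).toFinset

lemma mem_diagrams : P ∈ diagrams N d ↔ IsLinearDiagram N d P :=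
  (finite_setOf_isLinearDiagram N d).mem_toFinset

lemma card_filter_diagrams_eq_numA (d n m : ℕ) :
    #{P ∈ diagrams (n * d) d | #(loops P) = m} = numA d n m := by
  rw [numA, ← Set.ncard_coe_finset]
  congr 1
  ext P
  rw [mem_coe, mem_filter, mem_diagrams, Set.mem_ofPred_eq]
  exact and_congr_right fun hP ↦ by rw [hP.linLoops_eq]

lemma sum_diagrams_eq_sum_numA (d n : ℕ) {K : ℕ} {F : ℕ → ℕ} (hF : ∀ m, K ≤ m → F m = 0) :
    ∑ P ∈ diagrams (n * d) d, F #(loops P) = ∑ m ∈ range K, F m * numA d n m := by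
  simp only [← card_filter_diagrams_eq_numA, card_filter, mul_sum, mul_ite, mul_one, mul_zero]
  rw [sum_comm]
  refine sum_congr rfl fun P _ ↦ ?_
  rw [sum_ite_eq]
  split_ifs with h
  · rfl
  · exact hF _ (by simpa using h)

end Diagrams

section InsertBlock

/-- The diagram obtained from `Q` by relabelling its points along `skip b`, which makes room for the
points of `b`, and adding `b` as a new block. -/
noncomputable def insertBlock (b : Finset ℕ) (Q : Finset (Finset ℕ)) : Finset (Finset ℕ) :=
  insert b (Q.image (image (skip b)))

variable {M d : ℕ} {b : Finset ℕ} {P Q : Finset (Finset ℕ)}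

lemma mem_insertBlock_self (b : Finset ℕ) (Q : Finset (Finset ℕ)) : b ∈ insertBlock b Q :=
  mem_insert_self _ _

lemma existsUnique_mem_insertBlock_of_mem {x : ℕ} (hx : x ∈ b) :
    ∃! c, c ∈ insertBlock b Q ∧ x ∈ c := by
  refine ⟨b, ⟨mem_insertBlock_self b Q, hx⟩, ?_⟩
  simp only [insertBlock, mem_insert, mem_image]
  rintro _ ⟨rfl | ⟨c, -, rfl⟩, hxc⟩
  · rfl
  · obtain ⟨j, -, rfl⟩ := mem_image.1 hxc
    exact absurd hx (skip_notMem b j)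

lemma mem_insertBlock_and_skip_mem_iff {c : Finset ℕ} {j : ℕ} :
    c ∈ insertBlock b Q ∧ skip b j ∈ c ↔ ∃ a, (a ∈ Q ∧ j ∈ a) ∧ a.image (skip b) = c := by
  simp only [insertBlock, mem_insert, mem_image (f := image (skip b))]
  constructor
  · rintro ⟨rfl | ⟨a, ha, rfl⟩, hj⟩
    · exact absurd hj (skip_notMem c j)
    · exact ⟨a, ⟨ha, (skip_strictMono b).injective.mem_finset_image.1 hj⟩, rfl⟩
  · rintro ⟨a, ⟨ha, hj⟩, rfl⟩
    exact ⟨Or.inr ⟨a, ha, rfl⟩, mem_image_of_mem _ hj⟩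

lemma existsUnique_skip_mem_insertBlock_iff {j : ℕ} :
    (∃! c, c ∈ insertBlock b Q ∧ skip b j ∈ c) ↔ ∃! c, c ∈ Q ∧ j ∈ c := by
  have image_inj := image_injective (skip_strictMono b).injective
  simp only [mem_insertBlock_and_skip_mem_iff]
  constructor
  · rintro ⟨_, ⟨a, ha, rfl⟩, huniq⟩
    exact ⟨a, ha, fun c hc ↦ image_inj (huniq _ ⟨c, hc, rfl⟩)⟩
  · rintro ⟨a, ha, huniq⟩
    refine ⟨_, ⟨a, ha, rfl⟩, ?_⟩
    rintro _ ⟨c, hc, rfl⟩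
    rw [huniq c hc]

lemma isLinearDiagram_insertBlock_iff (hb : b ∈ powersetCard d (Icc 1 (M + d))) :
    IsLinearDiagram (M + d) d (insertBlock b Q) ↔ IsLinearDiagram M d Q := by
  obtain ⟨b_subset, card_b⟩ := mem_powersetCard.1 hb
  have covers_iff : (∀ x ∈ Icc 1 (M + d), ∃! c, c ∈ insertBlock b Q ∧ x ∈ c) ↔
      ∀ j ∈ Icc 1 M, ∃! c, c ∈ Q ∧ j ∈ c := by
    constructor
    · intro h j hj
      exact existsUnique_skip_mem_insertBlock_iff.1 (h _ ((skip_mem_Icc_iff hb).2 hj))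
    · intro h x hx
      by_cases hxb : x ∈ b
      · exact existsUnique_mem_insertBlock_of_mem hxb
      · obtain ⟨j, rfl⟩ := exists_skip_eq hxb
        exact existsUnique_skip_mem_insertBlock_iff.2 (h j ((skip_mem_Icc_iff hb).1 hx))
  refine and_congr ?_ (and_congr ?_ covers_iff)
  · simp only [insertBlock, forall_mem_insert, forall_mem_image, card_b, true_and,
      card_image_of_injective _ (skip_strictMono b).injective]
  · simp only [insertBlock, forall_mem_insert, forall_mem_image, skip_mem_Icc_iff hb]
    exact and_iff_right b_subset

lemma insertBlock_injective (hb : b.Nonempty) : Function.Injective (insertBlock b) := by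
  have image_skip_ne (Q : Finset (Finset ℕ)) : b ∉ Q.image (image (skip b)) := by
    intro h
    obtain ⟨c, -, hc⟩ := mem_image.1 h
    obtain ⟨x, hx⟩ := hb
    obtain ⟨j, -, rfl⟩ := mem_image.1 (hc ▸ hx)
    exact skip_notMem b j hx
  intro Q Q' h
  have := congrArg (erase · b) h
  simp only [insertBlock, erase_insert (image_skip_ne _)] at this
  exact image_injective (image_injective (skip_strictMono b).injective) this

lemma exists_insertBlock_eq (hb : b ∈ P) (hdisj : ∀ c ∈ P, c ≠ b → Disjoint b c) :
    ∃ Q, insertBlock b Q = P := by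
  have erase_subset : (P.erase b : Set (Finset ℕ)) ⊆ image (skip b) '' Set.univ := by
    intro c hc
    obtain ⟨hcb, hc⟩ := mem_erase.1 (mem_coe.1 hc)
    have c_subset : (c : Set ℕ) ⊆ skip b '' Set.univ := by
      intro x hx
      rw [Set.image_univ, range_skip]
      exact disjoint_right.1 (hdisj c hc hcb) (mem_coe.1 hx)
    obtain ⟨a, -, ha⟩ := subset_set_image_iff.1 c_subset
    exact ⟨a, Set.mem_univ a, ha⟩
  obtain ⟨Q, -, hQ⟩ := subset_set_image_iff.1 erase_subset
  exact ⟨Q, by rw [insertBlock, hQ, insert_erase hb]⟩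

lemma blockLoops_image_skip (b c : Finset ℕ) :
    blockLoops (c.image (skip b)) = {j ∈ blockLoops c | gap b j = 0}.image (skip b) := by
  ext i
  simp only [mem_blockLoops, mem_image, mem_filter]
  constructor
  · rintro ⟨⟨j, hj, rfl⟩, l, hl, hjl⟩
    obtain ⟨rfl, hgap⟩ := skip_eq_skip_add_one_iff.1 hjl
    exact ⟨j, ⟨⟨hj, hl⟩, hgap⟩, rfl⟩
  · rintro ⟨j, ⟨⟨hj, hj'⟩, hgap⟩, rfl⟩
    exact ⟨⟨j, hj, rfl⟩, j + 1, hj', skip_eq_skip_add_one_iff.2 ⟨rfl, hgap⟩⟩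

lemma loops_insertBlock (b : Finset ℕ) (Q : Finset (Finset ℕ)) :
    loops (insertBlock b Q) = blockLoops b ∪ {j ∈ loops Q | gap b j = 0}.image (skip b) := by
  simp only [loops, insertBlock, biUnion_insert, image_biUnion, blockLoops_image_skip,
    filter_biUnion, biUnion_image]

lemma loops_insertBlock_subset_iff :
    loops (insertBlock b Q) ⊆ blockLoops b ↔ ∀ j ∈ loops Q, gap b j ≠ 0 := by
  have skip_notMem_blockLoops (j : ℕ) : skip b j ∉ blockLoops b :=
    fun h ↦ skip_notMem b j (mem_blockLoops.1 h).1
  simp only [loops_insertBlock, union_subset_iff, subset_refl, true_and, image_subset_iff,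
    mem_filter, not_and, skip_notMem_blockLoops, imp_false, ne_eq]

lemma loops_insertBlock_of_forall (h : ∀ j ∈ loops Q, gap b j ≠ 0) :
    loops (insertBlock b Q) = blockLoops b :=
  (loops_insertBlock_subset_iff.2 h).antisymm (loops_insertBlock b Q ▸ subset_union_left)

end InsertBlock

section Decomposition

variable {M d k : ℕ}

lemma eq_and_eq_of_insertBlock_eq {b b' : Finset ℕ} {Q Q' : Finset (Finset ℕ)} (hk : k ≠ 0)
    (hQ : IsLinearDiagram M d Q) (hb : b ∈ breakingBlocks M d k (loops Q))
    (hb' : b' ∈ breakingBlocks M d k (loops Q')) (heq : insertBlock b Q = insertBlock b' Q') :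
    b = b' ∧ Q = Q' := by
  obtain ⟨hb, hbreak, hcard⟩ := mem_breakingBlocks.1 hb
  obtain ⟨-, hbreak', -⟩ := mem_breakingBlocks.1 hb'
  have loops_eq : blockLoops b = blockLoops b' := by
    rw [← loops_insertBlock_of_forall hbreak, heq, loops_insertBlock_of_forall hbreak']
  obtain ⟨i, hi⟩ : (blockLoops b).Nonempty := card_ne_zero.1 (hcard.trans_ne hk)
  have hib := (mem_blockLoops.1 hi).1
  obtain rfl : b = b' :=
    ((isLinearDiagram_insertBlock_iff hb).2 hQ).eq_of_mem (mem_insertBlock_self b Q)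
      (heq ▸ mem_insertBlock_self b' Q') hib (mem_blockLoops.1 (loops_eq ▸ hi)).1
  exact ⟨rfl, insertBlock_injective ⟨i, hib⟩ heq⟩

lemma bijOn_insertBlock (hk : k ≠ 0) :
    Set.BijOn (fun x : (_ : Finset (Finset ℕ)) × Finset ℕ ↦ insertBlock x.2 x.1)
      ((diagrams M d).sigma fun Q ↦ breakingBlocks M d k (loops Q))
      {P | IsLinearDiagram (M + d) d P ∧ #(loops P) = k ∧ ∃ b ∈ P, loops P ⊆ blockLoops b} := by
  refine ⟨?_, ?_, ?_⟩
  · rintro ⟨Q, b⟩ h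
    obtain ⟨hQ, hb⟩ := mem_sigma.1 (mem_coe.1 h)
    obtain ⟨hb, hbreak, hcard⟩ := mem_breakingBlocks.1 hb
    refine ⟨(isLinearDiagram_insertBlock_iff hb).2 (mem_diagrams.1 hQ), ?_, b,
      mem_insertBlock_self b Q, loops_insertBlock_subset_iff.2 hbreak⟩
    exact loops_insertBlock_of_forall hbreak ▸ hcard
  · rintro ⟨Q, b⟩ h ⟨Q', b'⟩ h' heq
    obtain ⟨hQ, hb⟩ := mem_sigma.1 (mem_coe.1 h)
    obtain ⟨-, hb'⟩ := mem_sigma.1 (mem_coe.1 h')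
    obtain ⟨rfl, rfl⟩ := eq_and_eq_of_insertBlock_eq hk (mem_diagrams.1 hQ) hb hb' heq
    rfl
  · rintro P ⟨hP, hcard, b, hbP, hsub⟩
    have hb := hP.mem_powersetCard hbP
    obtain ⟨Q, rfl⟩ := exists_insertBlock_eq hbP fun c hc hcb ↦
      disjoint_left.2 fun x hxb hxc ↦ hcb (hP.eq_of_mem hc hbP hxc hxb)
    have hbreak := loops_insertBlock_subset_iff.1 hsub
    rw [loops_insertBlock_of_forall hbreak] at hcard
    have hQ := (isLinearDiagram_insertBlock_iff hb).1 hP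
    exact ⟨⟨Q, b⟩, mem_coe.2 (mem_sigma.2
      ⟨mem_diagrams.2 hQ, mem_breakingBlocks.2 ⟨hb, hbreak, hcard⟩⟩), rfl⟩

lemma ncard_loops_subset_blockLoops (hk : k ≠ 0) (hkd : k ≤ d) :
    Set.ncard {P | IsLinearDiagram (M + d) d P ∧ #(loops P) = k ∧
        ∃ b ∈ P, loops P ⊆ blockLoops b} =
      (d - 1).choose k *
        ∑ Q ∈ diagrams M d, iChoose ((M : ℤ) + 1 - #(loops Q)) ((d : ℤ) - k - #(loops Q)) := by
  rw [← (bijOn_insertBlock hk).ncard_eq, Set.ncard_coe_finset, card_sigma, mul_sum]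
  refine sum_congr rfl fun Q hQ ↦ card_breakingBlocks ?_ hkd
  exact (mem_diagrams.1 hQ).loops_subset_range.trans (range_subset_range.2 M.le_succ)

end Decomposition

/-- for `1 ≤ k ≤ d−1`, the number of generalized linear diagrams of order
`(n,d)` with exactly `k` loops all lying in a single block equals
`C(d−1,k) · Σ_{m=0}^{d−k} C(d(n−1)+1−m, d−k−m) · a(n−1,m)`. -/
theorem linear_single_block_loops (d : ℕ) (hd : 2 ≤ d) (n : ℕ) (hn : 1 ≤ n) (k : ℕ)
    (hk1 : 1 ≤ k) (hk2 : k ≤ d - 1) :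
    Set.ncard {P : Finset (Finset ℕ) |
        IsLinearDiagram (n * d) d P ∧ linLoops (n * d) P = k ∧
          ∃ b ∈ P, ∀ i : ℕ, 1 ≤ i → i + 1 ≤ n * d →
            (∃ c ∈ P, i ∈ c ∧ i + 1 ∈ c) → i ∈ b ∧ i + 1 ∈ b} =
      (d - 1).choose k *
        ∑ m ∈ Finset.range (d - k + 1),
          iChoose ((d : ℤ) * ((n : ℤ) - 1) + 1 - (m : ℤ)) ((d : ℤ) - k - m) *
            numA d (n - 1) m := by
  obtain ⟨n, rfl⟩ := Nat.exists_eq_add_of_le' hn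
  have setOf_eq : {P : Finset (Finset ℕ) |
      IsLinearDiagram ((n + 1) * d) d P ∧ linLoops ((n + 1) * d) P = k ∧
        ∃ b ∈ P, ∀ i : ℕ, 1 ≤ i → i + 1 ≤ (n + 1) * d →
          (∃ c ∈ P, i ∈ c ∧ i + 1 ∈ c) → i ∈ b ∧ i + 1 ∈ b} =
      {P | IsLinearDiagram (n * d + d) d P ∧ #(loops P) = k ∧
        ∃ b ∈ P, loops P ⊆ blockLoops b} := by
    rw [Nat.succ_mul]
    ext P
    exact and_congr_right fun hP ↦ by
      simp only [hP.linLoops_eq, hP.loops_subset_blockLoops_iff]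
  let F (m : ℕ) : ℕ := iChoose (((n * d : ℕ) : ℤ) + 1 - m) ((d : ℤ) - k - m)
  have F_eq_zero (m : ℕ) (hm : d - k + 1 ≤ m) : F m = 0 := iChoose_of_neg (by omega)
  rw [setOf_eq, ncard_loops_subset_blockLoops (by omega) (by omega),
    sum_diagrams_eq_sum_numA d n F_eq_zero]
  refine congrArg _ (sum_congr rfl fun m _ ↦ ?_)
  have points_eq : ((n * d : ℕ) : ℤ) = d * (((n + 1 : ℕ) : ℤ) - 1) := by push_cast; ring
  rw [← points_eq, Nat.add_sub_cancel]
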